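/- Let M be a λ-term. If there exist a rigid term a ∈ T_r(M) and m ∈ ℕ such that H_r^m(a) is a head-normal form different from 0, then H^m(M) is a head-normal form (so M is head-normalizable). -/

import Mathlib

/-! Ordinary λ-terms, in de Bruijn notation. -/
inductive Lam : Type
  | var : ℕ → Lam
  | lam : Lam → Lam
  | app : Lam → Lam → Lam
  deriving DecidableEq

namespace Lam

/-- Shift the free indices `≥ d` up by one. -/
def lift (d : ℕ) : Lam → Lam
  | var n => if n < d then var n else var (n + 1)
  | lam M => lam (lift (d + 1) M)
  | app P Q => app (lift d P) (lift d Q)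

/-- Capture-avoiding substitution of `N` for the free variable `k`. -/
def subst : Lam → ℕ → Lam → Lam
  | var n, k, N => if n = k then N else if k < n then var (n - 1) else var n
  | lam M, k, N => lam (subst M (k + 1) (lift 0 N))
  | app P Q, k, N => app (subst P k N) (subst Q k N)

/-- Number of free occurrences of the variable `k`. -/
def count (k : ℕ) : Lam → ℕ
  | var n => if n = k then 1 else 0
  | lam M => count (k + 1) M
  | app P Q => count k P + count k Q

/-- One-step β-reduction. -/
inductive Beta : Lam → Lam → Prop
  | beta (M N : Lam) : Beta (app (lam M) N) (subst M 0 N)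
  | lam {M M'} : Beta M M' → Beta (lam M) (lam M')
  | appL {P P' Q} : Beta P P' → Beta (app P Q) (app P' Q)
  | appR {P Q Q'} : Beta Q Q' → Beta (app P Q) (app P Q')

/-- The head of the application spine is a variable, with no λ on the spine. -/
def neutral : Lam → Bool
  | var _ => true
  | lam _ => false
  | app P _ => neutral P

/-- Head-normal forms: `λx₁…λxₘ. x N₁ … Nₙ`. -/
def isHNF : Lam → Prop
  | var _ => True
  | lam M => isHNF M
  | app P _ => neutral P = true

/-- The head-reduction function `H`: contracts the head redex, identity on head-normal
forms. -/
def H : Lam → Lam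
  | var n => var n
  | lam M => lam (H M)
  | app (lam P) Q => subst P 0 Q
  | app (var n) Q => app (var n) Q
  | app (app P₁ P₂) Q => app (H (app P₁ P₂)) Q

/-- The left-parallel reduction function `L`: identity on β-normal forms, propagated to
the arguments on head-normal forms, contraction of the head redex otherwise. -/
def L : Lam → Lam
  | var n => var n
  | lam M => lam (L M)
  | app (lam P) Q => subst P 0 Q
  | app (var n) Q => app (var n) (L Q)
  | app (app P₁ P₂) Q =>
      if neutral (app P₁ P₂) then app (L (app P₁ P₂)) (L Q)
      else app (L (app P₁ P₂)) Q

/-- Iterated application `M N₁ … Nₙ`. -/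
def mkApps (M : Lam) (Ns : List Lam) : Lam := Ns.foldl app M

/-- All free variables are `< d`. -/
def ClosedAt (d : ℕ) : Lam → Prop
  | var n => n < d
  | lam M => ClosedAt (d + 1) M
  | app P Q => ClosedAt d P ∧ ClosedAt d Q

/-- `M` is head-normalizable: it β-reduces in finitely many steps to a head-normal form. -/
def HeadNormalizable (M : Lam) : Prop :=
  ∃ N, Relation.ReflTransGen Beta M N ∧ isHNF N

/-- `M` is a β-normal form: it contains no β-redex, i.e. admits no β-step. -/
def BetaNF (M : Lam) : Prop := ¬∃ N, Beta M N

/-- `M` is β-normalizable: it β-reduces in finitely many steps to a β-normal form. -/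
def BetaNormalizable (M : Lam) : Prop :=
  ∃ N, Relation.ReflTransGen Beta M N ∧ BetaNF N

/-- `M` is strongly β-normalizable: no infinite β-reduction sequence starts from `M`. -/
def StronglyNormalizable (M : Lam) : Prop := Acc (fun N M' => Beta M' N) M

end Lam

/-! Rigid resource terms (the nonzero ones), in de Bruijn notation:
`a ::= x | λx.a | ⟨c⟩d⃗` with `d⃗` a list of rigid terms.
The term `0` is represented by `none : Option Rig`. -/
inductive Rig : Type
  | var : ℕ → Rig
  | lam : Rig → Rig
  | app : Rig → List Rig → Rig

namespace Rig

mutual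
/-- Number of free occurrences of the variable `k` in a rigid term. -/
def countR (k : ℕ) : Rig → ℕ
  | var n => if n = k then 1 else 0
  | lam a => countR (k + 1) a
  | app c ds => countR k c + countRList k ds
termination_by a => sizeOf a

def countRList (k : ℕ) : List Rig → ℕ
  | [] => 0
  | d :: ds => countR k d + countRList k ds
termination_by ds => sizeOf ds
end

mutual
/-- Shift the free indices `≥ d` up by one. -/
def liftR (d : ℕ) : Rig → Rig
  | var n => if n < d then var n else var (n + 1)
  | lam a => lam (liftR (d + 1) a)
  | app c ds => app (liftR d c) (liftRList d ds)
termination_by a => sizeOf a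

def liftRList (d : ℕ) : List Rig → List Rig
  | [] => []
  | a :: as => liftR d a :: liftRList d as
termination_by as => sizeOf as
end

mutual
/-- Rigid substitution `a[b⃗/k]`: the list `b⃗` is distributed, in order, over the
free occurrences of the variable `k`; the result is `none` (i.e. `0`) when
`|b⃗| ≠ n_k(a)`. -/
def rsubst (k : ℕ) : Rig → List Rig → Option Rig
  | var n, bs =>
      if n = k then (match bs with | [b] => some b | _ => none)
      else (match bs with
            | [] => some (if k < n then var (n - 1) else var n)
            | _ => none)
  | lam a, bs => (rsubst (k + 1) a (liftRList 0 bs)).map lam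
  | app c ds, bs =>
      match rsubst k c (bs.take (countR k c)), rsubstList k ds (bs.drop (countR k c)) with
      | some c', some ds' => some (app c' ds')
      | _, _ => none
termination_by a _ => sizeOf a

def rsubstList (k : ℕ) : List Rig → List Rig → Option (List Rig)
  | [], bs => if bs.isEmpty then some [] else none
  | d :: ds, bs =>
      match rsubst k d (bs.take (countR k d)), rsubstList k ds (bs.drop (countR k d)) with
      | some d', some ds' => some (d' :: ds')
      | _, _ => none
termination_by ds _ => sizeOf ds
end

/-- One-step rigid resource reduction `→_r` (contextual closure of
`⟨λx.a⟩b⃗ →_r a[b⃗/x]`); the result may be `0` (i.e. `none`), which annihilates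
the surrounding context. -/
inductive RStep : Rig → Option Rig → Prop
  | beta (a : Rig) (bs : List Rig) : RStep (app (lam a) bs) (rsubst 0 a bs)
  | lam {a r} : RStep a r → RStep (lam a) (r.map lam)
  | head {c r} (ds : List Rig) : RStep c r → RStep (app c ds) (r.map (fun c' => app c' ds))
  | arg {d r} (c : Rig) (ds₁ ds₂ : List Rig) :
      RStep d r → RStep (app c (ds₁ ++ d :: ds₂)) (r.map (fun d' => app c (ds₁ ++ d' :: ds₂)))

/-- `→_r` on rigid terms extended with `0`; `0` is inert. -/
inductive RStepO : Option Rig → Option Rig → Prop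
  | mk {a r} : RStep a r → RStepO (some a) r

/-- `r` is a `→_r`-normal form (`0` is one). -/
def RNormal (r : Option Rig) : Prop := ¬∃ r', RStepO r r'

/-- The head of the application spine is a variable, with no λ on the spine. -/
def rNeutral : Rig → Bool
  | var _ => true
  | lam _ => false
  | app c _ => rNeutral c

/-- Rigid head-normal forms among nonzero terms: `λx₁…λxₘ.⟨…⟨x⟩d⃗₁…⟩d⃗ₙ`
(the term `0` is a head-normal form, but it is treated separately). -/
def rIsHNF : Rig → Prop
  | var _ => True
  | lam a => rIsHNF a
  | app c _ => rNeutral c = true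

/-- The rigid head-reduction function `H_r`: contracts the head redex, identity on
head-normal forms; the result may be `0` (i.e. `none`). -/
def Hr : Rig → Option Rig
  | var n => some (var n)
  | lam a => (Hr a).map lam
  | app (lam a) bs => rsubst 0 a bs
  | app (var n) ds => some (app (var n) ds)
  | app (app c₁ c₂) ds => (Hr (app c₁ c₂)).map (fun c' => app c' ds)

/-- `H_r` extended to terms-or-`0`. -/
def HrO : Option Rig → Option Rig := fun r => r.bind Hr

mutual
/-- The rigid left-parallel reduction function `L_r`: identity on `→_r`-normal forms,
applied componentwise to the argument lists on head-normal forms, contraction of the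
head redex otherwise; the result may be `0` (i.e. `none`). -/
def Lr : Rig → Option Rig
  | var n => some (var n)
  | lam a => (Lr a).map lam
  | app (lam a) bs => rsubst 0 a bs
  | app (var n) ds => (LrList ds).map (fun ds' => app (var n) ds')
  | app (app c₁ c₂) ds =>
      if rNeutral (app c₁ c₂) then
        match Lr (app c₁ c₂), LrList ds with
        | some c', some ds' => some (app c' ds')
        | _, _ => none
      else (Lr (app c₁ c₂)).map (fun c' => app c' ds)
termination_by a => sizeOf a

def LrList : List Rig → Option (List Rig)
  | [] => some []
  | d :: ds =>
      match Lr d, LrList ds with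
      | some d', some ds' => some (d' :: ds')
      | _, _ => none
termination_by ds => sizeOf ds
end

/-- `L_r` extended to terms-or-`0`. -/
def LrO : Option Rig → Option Rig := fun r => r.bind Lr

/-- Positive resource terms: no empty list/multiset occurs as the argument of an
application. -/
inductive rPositive : Rig → Prop
  | var (n : ℕ) : rPositive (var n)
  | lam {a} : rPositive a → rPositive (lam a)
  | app {c : Rig} {ds : List Rig} :
      rPositive c → ds ≠ [] → (∀ d ∈ ds, rPositive d) → rPositive (app c ds)

end Rig

/-- The rigid expansion `T_r(M)` of a λ-term (equivalently, the support of its Taylor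
expansion, with multisets presented by lists: `Texp M` is closed under permutation of
argument lists). -/
def Texp : Lam → Set Rig
  | Lam.var n => {Rig.var n}
  | Lam.lam M => {a | ∃ b ∈ Texp M, a = Rig.lam b}
  | Lam.app P Q => {a | ∃ c ∈ Texp P, ∃ ds : List Rig, (∀ d ∈ ds, d ∈ Texp Q) ∧ a = Rig.app c ds}

namespace Rig

/-- The support of the `n`-linear substitution `∂_k a · b̄`, where the multiset `b̄` is
presented by the list `bs`: the finite formal sum (multiset) of all nonzero results of
rigid substitutions along bijective assignments, i.e. permutations of `bs`. -/
def permSubst (k : ℕ) (a : Rig) (bs : List Rig) : Multiset Rig :=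
  ↑(bs.permutations.filterMap (fun bs' => rsubst k a bs'))

/-- One step of non-erasing ε-resource reduction `→^{¬e}_{∂ε}` out of a single resource
term, producing a finite formal sum (a multiset) of resource terms: non-erasing resource
β-steps `⟨λx.a⟩b̄ → ∂_x a · b̄` (with `x ∈ FV(a)`) and resource σ₁-steps, under any
context. -/
inductive NEStep : Rig → Multiset Rig → Prop
  | beta {a : Rig} (bs : List Rig) :
      0 < countR 0 a → NEStep (app (lam a) bs) (permSubst 0 a bs)
  | sigma (a : Rig) (ts qs : List Rig) :
      NEStep (app (app (lam a) ts) qs) {app (lam (app a (liftRList 0 qs))) ts}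
  | lam {a σ} : NEStep a σ → NEStep (lam a) (σ.map lam)
  | head {c σ} (ds : List Rig) : NEStep c σ → NEStep (app c ds) (σ.map (fun c' => app c' ds))
  | arg {d σ} (c : Rig) (ds₁ ds₂ : List Rig) :
      NEStep d σ → NEStep (app c (ds₁ ++ d :: ds₂)) (σ.map (fun d' => app c (ds₁ ++ d' :: ds₂)))

/-- Non-erasing ε-resource reduction on finite formal sums, extended by linearity. -/
def NEStepSum (σ τ : Multiset Rig) : Prop :=
  ∃ (a : Rig) (ρ υ : Multiset Rig), σ = a ::ₘ ρ ∧ NEStep a υ ∧ τ = υ + ρ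

/-- `σ` is a `→^{¬e}_{∂ε}`-normal form. -/
def NENormal (σ : Multiset Rig) : Prop := ¬∃ τ, NEStepSum σ τ

end Rig

/-- One step of non-erasing ε-reduction on λ-terms: non-erasing β-steps
`(λx.M)N → M[N/x]` (with `x ∈ FV(M)`) together with σ₁-steps
`((λx.M)N)P → (λx.MP)N` (`x ∉ FV(P)`), under any context. -/
inductive NEeps : Lam → Lam → Prop
  | beta {M : Lam} (N : Lam) :
      0 < Lam.count 0 M → NEeps (Lam.app (Lam.lam M) N) (Lam.subst M 0 N)
  | sigma (M N P : Lam) :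
      NEeps (Lam.app (Lam.app (Lam.lam M) N) P)
        (Lam.app (Lam.lam (Lam.app M (Lam.lift 0 P))) N)
  | lam {M M'} : NEeps M M' → NEeps (Lam.lam M) (Lam.lam M')
  | appL {P P' Q} : NEeps P P' → NEeps (Lam.app P Q) (Lam.app P' Q)
  | appR {P Q Q'} : NEeps Q Q' → NEeps (Lam.app P Q) (Lam.app P Q')

/-- The set `S` of λ-terms. -/
inductive SLam : Lam → Prop
  | varApp (n : ℕ) (Ms : List Lam) :
      (∀ M ∈ Ms, SLam M) → SLam (Lam.mkApps (Lam.var n) Ms)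
  | lam {M} : SLam M → SLam (Lam.lam M)
  | redex (M₀ M₁ : Lam) (Ms : List Lam) :
      SLam M₁ → SLam (Lam.mkApps (Lam.subst M₀ 0 M₁) Ms) →
      SLam (Lam.mkApps (Lam.app (Lam.lam M₀) M₁) Ms)

/-- λI-terms: every abstraction binds a variable occurring free in its body. -/
def LamI : Lam → Prop
  | Lam.var _ => True
  | Lam.lam M => LamI M ∧ 0 < Lam.count 0 M
  | Lam.app P Q => LamI P ∧ LamI Q

/-!
Rigid head reduction simulates head reduction inside the expansion. A redex of `M` and the
corresponding redex of `a ∈ T_r(M)` are contracted together: each element of the argument list of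
`a` lies in the expansion of the argument of `M`, so whichever of them reaches a given occurrence
of the bound variable, the result is in the expansion of the contractum, unless it is `0`. Hence
`H_r^m(a) ≠ 0` implies `H_r^m(a) ∈ T_r(H^m(M))`. Expansion preserves the spine of a term, so a
term is a head-normal form as soon as some element of its expansion is one.
-/

namespace Lam

open Relation

theorem reflTransGen_beta_h : ∀ M : Lam, ReflTransGen Beta M (H M)
  | var _ => .refl
  | lam M => (reflTransGen_beta_h M).lift lam fun _ _ => .lam
  | app (var _) _ => .refl
  | app (lam P) Q => .single (.beta P Q)
  | app (app P₁ P₂) Q => (reflTransGen_beta_h (app P₁ P₂)).lift (app · Q) fun _ _ => .appL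

theorem reflTransGen_beta_iterate_h (m : ℕ) (M : Lam) : ReflTransGen Beta M (H^[m] M) := by
  induction m with
  | zero => exact .refl
  | succ m ih =>
    rw [Function.iterate_succ_apply']
    exact ih.trans (reflTransGen_beta_h _)

end Lam

namespace Rig

variable {k n : ℕ} {a b c d : Rig} {bs ds ds' : List Rig} {M N : Lam}

theorem liftRList_eq_map (k : ℕ) (as : List Rig) : liftRList k as = as.map (liftR k) := by
  induction as with
  | nil => simp [liftRList]
  | cons a as ih => simp [liftRList, ih]

theorem rsubst_var_self_eq_some_iff : rsubst k (var k) bs = some b ↔ bs = [b] := by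
  rcases bs with _ | ⟨_, _ | _⟩ <;> simp [rsubst.eq_def]

theorem rsubst_var_of_ne_eq_some_iff (h : n ≠ k) :
    rsubst k (var n) bs = some b ↔ bs = [] ∧ (if k < n then var (n - 1) else var n) = b := by
  cases bs <;> simp [rsubst.eq_def, h]

theorem rsubst_lam_eq_some_iff :
    rsubst k (lam a) bs = some b ↔
      ∃ a', rsubst (k + 1) a (bs.map (liftR 0)) = some a' ∧ lam a' = b := by
  simp [rsubst, liftRList_eq_map]

theorem rsubst_app_eq_some_iff :
    rsubst k (app c ds) bs = some b ↔
      ∃ c' ds', rsubst k c (bs.take (countR k c)) = some c' ∧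
        rsubstList k ds (bs.drop (countR k c)) = some ds' ∧ app c' ds' = b := by
  rw [rsubst]
  split <;> simp_all

theorem rsubstList_nil_eq_some_iff : rsubstList k [] bs = some ds' ↔ bs = [] ∧ [] = ds' := by
  simp [rsubstList]

theorem rsubstList_cons_eq_some_iff :
    rsubstList k (d :: ds) bs = some ds' ↔
      ∃ e es, rsubst k d (bs.take (countR k d)) = some e ∧
        rsubstList k ds (bs.drop (countR k d)) = some es ∧ e :: es = ds' := by
  rw [rsubstList]
  split <;> simp_all

theorem exists_rsubst_eq_some_of_mem_rsubstList (h : rsubstList k ds bs = some ds')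
    (hb : b ∈ ds') : ∃ d ∈ ds, ∃ bs', bs' <:+: bs ∧ rsubst k d bs' = some b := by
  induction ds generalizing bs ds' with
  | nil =>
    obtain ⟨-, rfl⟩ := rsubstList_nil_eq_some_iff.1 h
    cases hb
  | cons d ds ih =>
    obtain ⟨e, es, he, hes, rfl⟩ := rsubstList_cons_eq_some_iff.1 h
    rcases List.mem_cons.1 hb with rfl | hb
    · exact ⟨d, List.mem_cons_self, _, (List.take_prefix _ _).isInfix, he⟩
    · obtain ⟨d', hd', bs', hbs', hb'⟩ := ih hes hb
      exact ⟨d', List.mem_cons_of_mem _ hd', bs', hbs'.trans (List.drop_suffix _ _).isInfix, hb'⟩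

theorem liftR_mem_texp_lift (k : ℕ) (ha : a ∈ Texp M) : liftR k a ∈ Texp (Lam.lift k M) := by
  induction M generalizing k a with
  | var n =>
    obtain rfl := ha
    rw [liftR, Lam.lift]
    split <;> rfl
  | lam M ih =>
    obtain ⟨b, hb, rfl⟩ := ha
    rw [liftR]
    exact ⟨_, ih (k + 1) hb, rfl⟩
  | app P Q ihP ihQ =>
    obtain ⟨c, hc, ds, hds, rfl⟩ := ha
    rw [liftR, liftRList_eq_map]
    exact ⟨_, ihP k hc, _, List.forall_mem_map.2 fun d hd => ihQ k (hds d hd), rfl⟩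

theorem rsubst_mem_texp_subst (ha : a ∈ Texp M) (hbs : ∀ b ∈ bs, b ∈ Texp N)
    (hc : rsubst k a bs = some c) : c ∈ Texp (Lam.subst M k N) := by
  induction M generalizing N k a bs c with
  | var n =>
    obtain rfl := ha
    rw [Lam.subst]
    split_ifs with hnk hkn
    · subst hnk
      obtain rfl := rsubst_var_self_eq_some_iff.1 hc
      exact hbs c List.mem_cons_self
    all_goals
      obtain ⟨-, rfl⟩ := (rsubst_var_of_ne_eq_some_iff hnk).1 hc
      simp [hkn, Texp]
  | lam M ih =>
    obtain ⟨a, ha, rfl⟩ := ha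
    obtain ⟨a', ha', rfl⟩ := rsubst_lam_eq_some_iff.1 hc
    have hlift : ∀ b ∈ bs.map (liftR 0), b ∈ Texp (Lam.lift 0 N) :=
      List.forall_mem_map.2 fun b hb => liftR_mem_texp_lift 0 (hbs b hb)
    exact ⟨a', ih ha hlift ha', rfl⟩
  | app P Q ihP ihQ =>
    obtain ⟨p, hp, ds, hds, rfl⟩ := ha
    obtain ⟨p', ds', hp', hds', rfl⟩ := rsubst_app_eq_some_iff.1 hc
    refine ⟨p', ihP hp (fun b hb => hbs b (List.mem_of_mem_take hb)) hp', ds', fun e he => ?_, rfl⟩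
    obtain ⟨d, hd, bs', hsub, he'⟩ := exists_rsubst_eq_some_of_mem_rsubstList hds' he
    exact ihQ (hds d hd) (fun b hb => hbs b (List.mem_of_mem_drop (hsub.subset hb))) he'

theorem hr_mem_texp_h (ha : a ∈ Texp M) (hb : Hr a = some b) : b ∈ Texp (Lam.H M) := by
  induction M generalizing a b with
  | var n =>
    obtain rfl := ha
    obtain rfl := Option.some.inj hb
    rfl
  | lam M ih =>
    obtain ⟨a, ha, rfl⟩ := ha
    obtain ⟨a', ha', rfl⟩ := Option.map_eq_some_iff.1 hb
    exact ⟨a', ih ha ha', rfl⟩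
  | app P Q ihP _ =>
    obtain ⟨c, hc, ds, hds, rfl⟩ := ha
    cases P with
    | var n =>
      obtain rfl := hc
      obtain rfl := Option.some.inj hb
      exact ⟨_, rfl, ds, hds, rfl⟩
    | lam P =>
      obtain ⟨p, hp, rfl⟩ := hc
      exact rsubst_mem_texp_subst hp hds hb
    | app P₁ P₂ =>
      have ⟨_, _, _, _, hc_app⟩ := hc
      subst hc_app
      obtain ⟨c', hc', rfl⟩ := Option.map_eq_some_iff.1 hb
      exact ⟨c', ihP hc hc', ds, hds, rfl⟩

theorem iterate_hrO_mem_texp_iterate_h {m : ℕ} (ha : a ∈ Texp M)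
    (hb : HrO^[m] (some a) = some b) : b ∈ Texp (Lam.H^[m] M) := by
  induction m generalizing b with
  | zero => exact Option.some.inj hb ▸ ha
  | succ m ih =>
    rw [Function.iterate_succ_apply'] at hb ⊢
    obtain ⟨c, hc, hcb⟩ := Option.bind_eq_some_iff.1 hb
    exact hr_mem_texp_h (ih hc) hcb

theorem rNeutral_eq_neutral_of_mem_texp (ha : a ∈ Texp M) : rNeutral a = Lam.neutral M := by
  induction M generalizing a with
  | var n => obtain rfl := ha; rfl
  | lam M _ => obtain ⟨b, _, rfl⟩ := ha; rfl
  | app P Q ihP _ => obtain ⟨c, hc, ds, _, rfl⟩ := ha; rw [rNeutral, Lam.neutral, ihP hc]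

theorem rIsHNF_iff_isHNF_of_mem_texp (ha : a ∈ Texp M) : rIsHNF a ↔ Lam.isHNF M := by
  induction M generalizing a with
  | var n => obtain rfl := ha; rfl
  | lam M ih => obtain ⟨b, hb, rfl⟩ := ha; rw [rIsHNF, Lam.isHNF, ih hb]
  | app P Q _ _ =>
    obtain ⟨c, hc, ds, _, rfl⟩ := ha
    rw [rIsHNF, Lam.isHNF, rNeutral_eq_neutral_of_mem_texp hc]

end Rig

/-- if some `a ∈ T_r(M)` satisfies that `H_r^m(a)` is a head-normal form
different from `0`, then `H^m(M)` is a head-normal form (so `M` is head-normalizable). -/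
theorem head_normalization_of_rigid {M : Lam} {a : Rig} {m : ℕ}
    (ha : a ∈ Texp M)
    (h : ∃ b : Rig, Rig.HrO^[m] (some a) = some b ∧ Rig.rIsHNF b) :
    Lam.isHNF (Lam.H^[m] M) ∧ Lam.HeadNormalizable M := by
  obtain ⟨b, hb, hb_hnf⟩ := h
  have hbM : b ∈ Texp (Lam.H^[m] M) := Rig.iterate_hrO_mem_texp_iterate_h ha hb
  have hM : Lam.isHNF (Lam.H^[m] M) := (Rig.rIsHNF_iff_isHNF_of_mem_texp hbM).1 hb_hnf
  exact ⟨hM, Lam.H^[m] M, Lam.reflTransGen_beta_iterate_h m M, hM⟩
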